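/- Let M ≥ 2, 1 ≤ K ≤ M, let v_1,…,v_M be vectors in ℝ^d, and let v̄ = (1/M)·Σ_{m=1}^{M} v_m. Then the uniform average over all K-element subsets A of {1,…,M} of ‖(1/K)·Σ_{m∈A} v_m − v̄‖₂² equals (M−K)/(K·M·(M−1))·Σ_{m=1}^{M} ‖v_m − v̄‖₂². -/

import Mathlib

/-!
Put `w m = v m - v̄`, so that `∑ m, w m = 0` and the quantity averaged is `K⁻² ‖∑ m ∈ A, w m‖²`.
Expanding the square and exchanging sums, the pair `(i, j)` contributes `⟪w i, w j⟫` once for each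
`K`-subset containing both `i` and `j`. By `pair_count`, the proportion of such subsets is `K / M`
if `i = j` and `(K / M) * r` with `r = (K - 1) / (M - 1)` otherwise. Since
`∑ i, ∑ j, ⟪w i, w j⟫ = ‖∑ m, w m‖² = 0`, only the diagonal excess
`(K / M) * (1 - r) = (K / M) * (M - K) / (M - 1)` survives (`sum_norm_sq`).
-/

open Finset

/-- First and second inclusion counts for uniform sampling without replacement: the number of
`K`-subsets containing both `i` and `j`, with `i = j` allowed. -/
lemma pair_count {M K : ℕ} (hM : 2 ≤ M) (hK1 : 1 ≤ K) (i j : Fin M) :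
    (#{A ∈ powersetCard K (univ : Finset (Fin M)) | i ∈ A ∧ j ∈ A} : ℝ)
      = M.choose K * (K / M) * (if i = j then 1 else ((K : ℝ) - 1) / (M - 1)) := by
  have hset : ∀ A : Finset (Fin M), (i ∈ A ∧ j ∈ A) ↔ ({i, j} : Finset (Fin M)) ⊆ A := by
    simp [insert_subset_iff]
  simp_rw [hset]
  obtain ⟨m, rfl⟩ : ∃ m, M = m + 2 := ⟨M - 2, by omega⟩
  obtain ⟨k, rfl⟩ : ∃ k, K = k + 1 := ⟨K - 1, by omega⟩
  have h1 : ((m : ℝ) + 2) * (m + 1).choose k = (m + 2).choose (k + 1) * (k + 1) := by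
    exact_mod_cast Nat.add_one_mul_choose_eq (m + 1) k
  split_ifs with hij
  · subst hij
    rw [card_filter_powersetCard_subset _ _ _ (subset_univ _) (by simp)]
    simp only [mem_singleton, insert_eq_of_mem, card_singleton, card_univ, Fintype.card_fin]
    push_cast
    field_simp
    simpa [mul_comm] using h1
  · have hc : #({i, j} : Finset (Fin (m + 2))) = 2 := card_pair hij
    obtain rfl | ⟨l, rfl⟩ : k = 0 ∨ ∃ l, k = l + 1 := by
      cases k <;> simp
    -- For `K = 1` no subset contains two distinct points, and `(K - 1) / (M - 1) = 0`.
    · have : #{A ∈ powersetCard (0 + 1) (univ : Finset (Fin (m + 2))) | {i, j} ⊆ A} = 0 := by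
        rw [card_eq_zero, filter_eq_empty_iff]
        intro A hA hs
        have := card_le_card hs
        rw [mem_powersetCard_univ] at hA
        omega
      simp [this]
    · rw [card_filter_powersetCard_subset _ _ _ (subset_univ _) (by omega), hc]
      have h2 : ((m : ℝ) + 1) * m.choose l = (m + 1).choose (l + 1) * (l + 1) := by
        exact_mod_cast Nat.add_one_mul_choose_eq m l
      simp only [card_univ, Fintype.card_fin, Nat.add_sub_cancel]
      have : l + 1 + 1 - 2 = l := by omega
      rw [this]
      have h3 : ((m : ℝ) + 2 - 1) ≠ 0 := by
        have : (0 : ℝ) ≤ m := m.cast_nonneg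
        linarith
      push_cast at *
      field_simp
      linear_combination ((m : ℝ) + 2) * h2 + (l + 1) * h1

/-- The second moment of the subset sum, for vectors with total sum zero. -/
lemma sum_norm_sq {M K : ℕ} (hM : 2 ≤ M) (hK1 : 1 ≤ K) {E : Type*}
    [NormedAddCommGroup E] [InnerProductSpace ℝ E] (w : Fin M → E) (hw : ∑ m, w m = 0) :
    ∑ A ∈ powersetCard K (univ : Finset (Fin M)), ‖∑ m ∈ A, w m‖ ^ 2
      = M.choose K * (K / M) * (((M : ℝ) - K) / (M - 1)) * ∑ m, ‖w m‖ ^ 2 := by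
  have hM1 : (M : ℝ) - 1 ≠ 0 := by
    have : (2 : ℝ) ≤ M := by exact_mod_cast hM
    linarith
  set r : ℝ := ((K : ℝ) - 1) / (M - 1) with hr
  have hr' : ((M : ℝ) - K) / (M - 1) = 1 - r := by rw [hr]; field_simp; ring
  have hexp : ∀ A : Finset (Fin M), ‖∑ m ∈ A, w m‖ ^ 2
      = ∑ i, ∑ j, if i ∈ A ∧ j ∈ A then inner ℝ (w i) (w j) else 0 := by
    intro A
    rw [← real_inner_self_eq_norm_sq, sum_inner]
    simp_rw [inner_sum, ite_and]
    simp
  have hzero : ∑ i, ∑ j, inner ℝ (w i) (w j) = 0 := by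
    simp_rw [← inner_sum, hw, inner_zero_right, sum_const_zero]
  calc _ = ∑ i, ∑ j, (M.choose K * (K / M) * (if i = j then 1 else r)) * inner ℝ (w i) (w j) := by
        simp_rw [hexp]
        rw [sum_comm]
        refine sum_congr rfl fun i _ => ?_
        rw [sum_comm]
        refine sum_congr rfl fun j _ => ?_
        rw [← pair_count hM hK1, ← sum_filter, sum_const, nsmul_eq_mul]
    _ = ∑ i, ∑ j, (M.choose K * (K / M) * (1 - r) * (if i = j then inner ℝ (w i) (w j) else 0)
          + M.choose K * (K / M) * r * inner ℝ (w i) (w j)) := by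
        refine sum_congr rfl fun i _ => sum_congr rfl fun j _ => ?_
        split_ifs <;> ring
    _ = _ := by
        simp_rw [sum_add_distrib, ← mul_sum, hzero, hr']
        simp

/-- Variance of scheduling: the uniform average over all `K`-element subsets `A` of
`{1,…,M}` of `‖(1/K) Σ_{m∈A} v m − v̄‖₂²`, where `v̄ = (1/M) Σ_m v m`, equals
`(M−K)/(K·M·(M−1)) · Σ_m ‖v m − v̄‖₂²`. -/
theorem stmt6 {d M K : ℕ} (hM : 2 ≤ M) (hK1 : 1 ≤ K) (hKM : K ≤ M)
    (v : Fin M → EuclideanSpace ℝ (Fin d)) :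
    ((M.choose K : ℝ))⁻¹ * ∑ A ∈ Finset.powersetCard K (Finset.univ : Finset (Fin M)),
        ‖(K : ℝ)⁻¹ • ∑ m ∈ A, v m - (M : ℝ)⁻¹ • ∑ m, v m‖ ^ 2
      = ((M : ℝ) - K) / ((K : ℝ) * M * ((M : ℝ) - 1)) *
          ∑ m, ‖v m - (M : ℝ)⁻¹ • ∑ m', v m'‖ ^ 2 := by
  have hK0 : (K : ℝ) ≠ 0 := by positivity
  have hM0 : (M : ℝ) ≠ 0 := by positivity
  have hM1 : (M : ℝ) - 1 ≠ 0 := by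
    have : (2 : ℝ) ≤ M := by exact_mod_cast hM
    linarith
  have hC : (M.choose K : ℝ) ≠ 0 := by exact_mod_cast (Nat.choose_pos hKM).ne'
  set b := (M : ℝ)⁻¹ • ∑ m, v m with hb
  have hw : ∑ m, (v m - b) = 0 := by
    rw [sum_sub_distrib, sum_const, card_univ, Fintype.card_fin, ← Nat.cast_smul_eq_nsmul ℝ, hb,
      smul_inv_smul₀ hM0, sub_self]
  have hA : ∀ A ∈ powersetCard K (univ : Finset (Fin M)),
      ‖(K : ℝ)⁻¹ • ∑ m ∈ A, v m - b‖ ^ 2 = ((K : ℝ)⁻¹) ^ 2 * ‖∑ m ∈ A, (v m - b)‖ ^ 2 := by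
    intro A hA
    rw [mem_powersetCard_univ] at hA
    rw [sum_sub_distrib, sum_const, hA, ← Nat.cast_smul_eq_nsmul ℝ, ← sq_abs (K : ℝ)⁻¹,
      ← Real.norm_eq_abs, ← mul_pow, ← norm_smul, smul_sub, inv_smul_smul₀ hK0]
  rw [sum_congr rfl hA, ← mul_sum, sum_norm_sq hM hK1 _ hw]
  field_simp
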